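/- The binary classification objective c ↦ E_{x∼p}[log c(x)] + E_{x∼q}[log(1 − c(x))] over measurable functions c : X → (0,1) is maximized pointwise by c*(x) = p(x)/(p(x)+q(x)) at every x with p(x)+q(x) > 0. -/

import Mathlib

open scoped BigOperators

lemma aux_log_bound (a s t : ℝ) (ha : 0 ≤ a) (hs : 0 < s) (ht : 0 < t) :
    a * Real.log t ≤ a * Real.log (a / s) + (s * t - a) := by
  rcases ha.eq_or_lt with h | h
  · subst h
    have := mul_pos hs ht
    simp only [zero_mul]
    linarith
  · have hd : 0 < a / s := div_pos h hs
    have h1 := Real.log_le_sub_one_of_pos (div_pos ht hd)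
    rw [Real.log_div ht.ne' hd.ne'] at h1
    have h2 := mul_le_mul_of_nonneg_left h1 ha
    have h3 : a * (t / (a / s) - 1) = s * t - a := by
      field_simp
    linarith

/-- The binary classification objective is maximized pointwise by the optimal
discriminator `c*(x) = p(x)/(p(x)+q(x))` at every `x` with `p(x)+q(x) > 0`. -/
theorem optimal_discriminator {X : Type*} [Fintype X]
    (p q : X → ℝ)
    (hp0 : ∀ x, 0 ≤ p x) (hpsum : ∑ x : X, p x = 1)
    (hq0 : ∀ x, 0 ≤ q x) (hqsum : ∑ x : X, q x = 1) :
    ∀ x : X, 0 < p x + q x →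
      ∀ t : ℝ, 0 < t → t < 1 →
        p x * Real.log t + q x * Real.log (1 - t) ≤
          p x * Real.log (p x / (p x + q x)) +
            q x * Real.log (1 - p x / (p x + q x)) := by
  intro x hs t ht0 ht1
  have e : 1 - p x / (p x + q x) = q x / (p x + q x) := by
    rw [eq_div_iff hs.ne', sub_mul, div_mul_cancel₀ _ hs.ne']
    ring
  rw [e]
  have h1 := aux_log_bound (p x) (p x + q x) t (hp0 x) hs ht0
  have h2 := aux_log_bound (q x) (p x + q x) (1 - t) (hq0 x) hs (by linarith)
  linarith
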